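/- arXiv:2512.12329 — 2 statements merged into one kernel-verified Lean document; each statement's English description precedes it below -/
import Mathlib

section
/- For every finite graph G and weighting w of G, there exist either (a) an induced cycle C in G of length at least 4 and a vertex p ∈ V(G) \ V(C) such that N[V(C) ∪ {p}] is a w-balanced separator of G, or (b) two vertices p, q ∈ V(G) such that N[{p,q}] is a w-balanced separator of G. -/
open SimpleGraph

variable {V : Type}

/-- `u` and `v` are connected by a walk in `G` avoiding `S`
(i.e., they lie in the same component of `G - S`). -/
def ReachOutside (G : SimpleGraph V) (S : Set V) (u v : V) : Prop :=
  ∃ p : G.Walk u v, ∀ x ∈ p.support, x ∉ S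

/-- Total weight of a vertex set. -/
noncomputable def setWeight [Finite V] (w : V → ℝ) (A : Set V) : ℝ :=
  ∑ v ∈ (Set.toFinite A).toFinset, w v

/-- `S` is a `w`-balanced separator of `G`: every component of `G - S`
has weight at most half the total weight. -/
def IsBalancedSep [Finite V] (G : SimpleGraph V) (w : V → ℝ) (S : Set V) : Prop :=
  ∀ v, v ∉ S → setWeight w {u | ReachOutside G S u v} ≤ setWeight w (Set.univ : Set V) / 2

/-- Closed neighbourhood `N[A]` of a vertex set. -/
def closedNbhd (G : SimpleGraph V) (A : Set V) : Set V :=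
  A ∪ {x | ∃ a ∈ A, G.Adj a x}

/-- `S` separates `A` from `B` in `G`: every walk from `A` to `B` meets `S`. -/
def Separates (G : SimpleGraph V) (S A B : Set V) : Prop :=
  ∀ a ∈ A, ∀ b ∈ B, ∀ p : G.Walk a b, ∃ x ∈ p.support, x ∈ S

/-- `C` is (the vertex set of) an induced cycle of `G`: the induced subgraph is
connected and every vertex of `C` has exactly two neighbours in `C`. -/
def IsInducedCycle (G : SimpleGraph V) (C : Set V) : Prop :=
  (G.induce C).Connected ∧ ∀ x ∈ C, (G.neighborSet x ∩ C).ncard = 2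

/-- `H` is an induced minor of `G`. -/
def IsInducedMinor {W : Type} (H : SimpleGraph W) (G : SimpleGraph V) : Prop :=
  ∃ X : W → Set V,
    (∀ a, (G.induce (X a)).Connected) ∧
    (Pairwise fun a b => Disjoint (X a) (X b)) ∧
    ∀ a b, a ≠ b → ((∃ u ∈ X a, ∃ v ∈ X b, G.Adj u v) ↔ H.Adj a b)

/-- `H` is a minor of `G`. -/
def IsMinor {W : Type} (H : SimpleGraph W) (G : SimpleGraph V) : Prop :=
  ∃ X : W → Set V,
    (∀ a, (G.induce (X a)).Connected) ∧
    (Pairwise fun a b => Disjoint (X a) (X b)) ∧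
    ∀ a b, H.Adj a b → ∃ u ∈ X a, ∃ v ∈ X b, G.Adj u v

/-- The `ℓ`-wheel: a cycle of length `ℓ` plus a universal vertex (`none`). -/
def wheel (ℓ : ℕ) : SimpleGraph (Option (ZMod ℓ)) :=
  SimpleGraph.fromRel fun a b =>
    a = none ∨ b = none ∨ ∃ i : ZMod ℓ, a = some i ∧ b = some (i + 1)

/-- The `ℓ`-fan: a path on `ℓ` vertices plus a universal vertex (`none`). -/
def fan (ℓ : ℕ) : SimpleGraph (Option (Fin ℓ)) :=
  SimpleGraph.fromRel fun a b =>
    a = none ∨ b = none ∨ ∃ i j : Fin ℓ, a = some i ∧ b = some j ∧ (j : ℕ) = (i : ℕ) + 1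

/-!
The path argument of Gyárfás grows an induced path towards heavy components until its closed
neighbourhood is a balanced separator. Take a shortest induced path `P` with this property, with
ends `u` and `v`. Deleting either end leaves a heavy component adjacent to that end; two heavy
components intersect, so `u` and `v` are also connected off `N[P \ {u, v}]`, and `P` closes up to an
induced cycle `C ⊇ P`. If some vertex lies off `C`, then `C` with that vertex added serves, since
its closed neighbourhood contains `N[P]`. If `C` is the whole vertex set, then the inner vertices of
`P` have no neighbours off `P`, and already `N[{u, v}]` is balanced.
-/

section Walks

variable {α : Type*} {G : SimpleGraph α} {t u v : α}

lemma support_subset_of_length_le_one {p : G.Walk u v} (hlen : p.length ≤ 1) :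
    {x | x ∈ p.support} ⊆ {u, v} := by
  match p, hlen with
  | .nil, _ => simp
  | .cons _ .nil, _ => intro x; simp

lemma support_cons_sdiff_start {p : G.Walk u v} (htu : G.Adj t u) (ht : t ∉ p.support) :
    {x | x ∈ (p.cons htu).support} \ {t} = {x | x ∈ p.support} := by
  ext x
  simp only [Walk.support_cons, List.mem_cons, Set.mem_sdiff, Set.mem_ofPred_eq,
    Set.mem_singleton_iff]
  grind

lemma start_notMem_tail_support {p : G.Walk u v} (hp : p.IsPath) : u ∉ p.support.tail :=
  (List.nodup_cons.1 (p.cons_tail_support ▸ hp.support_nodup)).1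

lemma ncard_support_of_isCycle {c : G.Walk u u} (hc : c.IsCycle) :
    {x | x ∈ c.support}.ncard = c.length := by
  classical
  have htail : {x | x ∈ c.support} = (c.support.tail.toFinset : Set α) := by
    ext x
    simp only [List.coe_toFinset, Set.mem_ofPred_eq]
    exact ⟨fun hx => by
      rcases c.mem_support_iff.1 hx with rfl | hx
      exacts [Walk.end_mem_tail_support hc.not_nil, hx], List.mem_of_mem_tail⟩
  rw [htail, Set.ncard_coe_finset, List.toFinset_card_of_nodup hc.support_nodup]
  simp

lemma isChordless_append {p : G.Walk u v} {q : G.Walk v t} (hp : p.IsChordless)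
    (hq : q.IsChordless)
    (hpq : ∀ x ∈ p.support, ∀ y ∈ q.support, G.Adj x y → x ∈ q.support ∨ y ∈ p.support) :
    (p.append q).IsChordless := by
  have mem_edges : ∀ x ∈ p.support, ∀ y ∈ q.support, G.Adj x y → s(x, y) ∈ (p.append q).edges := by
    intro x hx y hy hxy
    rw [Walk.edges_append, List.mem_append]
    exact (hpq x hx y hy hxy).symm.imp (hp.mem_edges hx · hxy) (hq.mem_edges · hy hxy)
  rw [Walk.isChordless_iff_forall_mem_edges]
  intro x y hx hy hxy
  rw [Walk.mem_support_append_iff] at hx hy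
  rcases hx with hx | hx <;> rcases hy with hy | hy
  · simp [hp.mem_edges hx hy hxy]
  · exact mem_edges x hx y hy hxy
  · rw [Sym2.eq_swap]
    exact mem_edges y hy x hx hxy.symm
  · simp [hq.mem_edges hx hy hxy]

/-- `p` is an induced path: a path without chords. Its vertex set then induces a path of `G` whose
order of vertices is that of `p`. -/
structure IsInducedPath (p : G.Walk u v) : Prop where
  isPath : p.IsPath
  isChordless : p.IsChordless

lemma isInducedPath_nil : IsInducedPath (.nil : G.Walk u u) where
  isPath := .nil
  isChordless := by simp [Walk.isChordless_iff_forall_mem_edges]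

lemma IsInducedPath.cons {p : G.Walk u v} (hp : IsInducedPath p) (htu : G.Adj t u)
    (ht : t ∉ p.support) (honly : ∀ x ∈ p.support, G.Adj t x → x = u) :
    IsInducedPath (p.cons htu) where
  isPath := hp.isPath.cons ht
  isChordless := by
    rw [Walk.isChordless_iff_forall_mem_edges]
    simp only [Walk.support_cons, Walk.edges_cons, List.mem_cons]
    rintro x y (rfl | hx) (rfl | hy) hxy
    · exact absurd hxy (G.irrefl)
    · exact .inl (by rw [honly y hy hxy])
    · exact .inl (by rw [honly x hx hxy.symm, Sym2.eq_swap])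
    · exact .inr (hp.isChordless.mem_edges hx hy hxy)

lemma IsInducedPath.of_cons {p : G.Walk u v} {htu : G.Adj t u} (hp : IsInducedPath (p.cons htu)) :
    IsInducedPath p where
  isPath := hp.isPath.of_cons
  isChordless := by
    have ht : t ∉ p.support := ((Walk.cons_isPath_iff htu p).1 hp.isPath).2
    rw [Walk.isChordless_iff_forall_mem_edges]
    intro x y hx hy hxy
    have hedge :=
      hp.isChordless.mem_edges (List.mem_cons_of_mem t hx) (List.mem_cons_of_mem t hy) hxy
    rcases List.mem_cons.1 hedge with heq | hmem
    · have : t ∈ s(x, y) := heq ▸ Sym2.mem_mk_left t u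
      rcases Sym2.mem_iff.1 this with rfl | rfl <;> contradiction
    · exact hmem

lemma IsInducedPath.reverse {p : G.Walk u v} (hp : IsInducedPath p) : IsInducedPath p.reverse where
  isPath := hp.isPath.reverse
  isChordless := by
    simpa [Walk.isChordless_iff_forall_mem_edges] using
      Walk.isChordless_iff_forall_mem_edges.1 hp.isChordless

lemma IsInducedPath.two_le_length_iff {p : G.Walk u v} (hp : IsInducedPath p) :
    2 ≤ p.length ↔ u ≠ v ∧ ¬ G.Adj u v := by
  constructor
  · intro hlen
    refine ⟨?_, fun huv => ?_⟩
    · rintro rfl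
      have := Walk.length_eq_zero_iff.2 (Walk.isPath_iff_nil.1 hp.isPath)
      omega
    · have := hp.isPath.length_eq_one_of_mem_edges
        (hp.isChordless.mem_edges p.start_mem_support p.end_mem_support huv)
      omega
  · rintro ⟨hne, hnadj⟩
    have hzero : p.length ≠ 0 := fun h => hne (Walk.eq_of_length_eq_zero h)
    have hone : p.length ≠ 1 := fun h => hnadj (Walk.adj_of_length_eq_one h)
    omega

lemma isChordless_of_length_eq_dist {p : G.Walk u v} (hp : p.length = G.dist u v) :
    p.IsChordless := by
  have mem_edges_of_isSubwalk {x y : α} {s : G.Walk x y} (hs : s.IsSubwalk p) (hxy : G.Adj x y) :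
      s(x, y) ∈ p.edges := by
    have hlen : s.length = 1 := (length_eq_dist_of_subwalk hp hs).trans (dist_eq_one_iff_adj.2 hxy)
    refine hs.edges_subset ?_
    match s, hlen with
    | .cons _ .nil, _ => simp
  rw [Walk.isChordless_iff_forall_mem_edges]
  intro x y hx hy hxy
  obtain ⟨q, r, hqr⟩ := Walk.mem_support_iff_exists_append.1 hx
  rw [hqr, Walk.mem_support_append_iff] at hy
  rcases hy with hy | hy
  · obtain ⟨q₁, q₂, rfl⟩ := Walk.mem_support_iff_exists_append.1 hy
    rw [Sym2.eq_swap]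
    exact mem_edges_of_isSubwalk ⟨q₁, r, hqr⟩ hxy.symm
  · obtain ⟨r₁, r₂, rfl⟩ := Walk.mem_support_iff_exists_append.1 hy
    exact mem_edges_of_isSubwalk ⟨q, r₂, by rw [hqr, Walk.append_assoc]⟩ hxy

lemma isInducedPath_of_length_eq_dist {p : G.Walk u v} (hp : p.length = G.dist u v) :
    IsInducedPath p :=
  ⟨p.isPath_of_length_eq_dist hp, isChordless_of_length_eq_dist hp⟩

lemma IsInducedPath.map_induce {D : Set α} {u v : D} {p : (G.induce D).Walk u v}
    (hp : IsInducedPath p) : IsInducedPath (p.map (Embedding.induce D).toHom) where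
  isPath := hp.isPath.map Subtype.val_injective
  isChordless := by
    rw [Walk.isChordless_iff_forall_mem_edges]
    intro x y hx hy hxy
    rw [Walk.support_map, List.mem_map] at hx hy
    obtain ⟨x, hx, rfl⟩ := hx
    obtain ⟨y, hy, rfl⟩ := hy
    rw [Walk.edges_map]
    exact List.mem_map_of_mem (hp.isChordless.mem_edges hx hy hxy)

lemma exists_isInducedPath_support_subset {D : Set α} (p : G.Walk u v)
    (hp : ∀ x ∈ p.support, x ∈ D) :
    ∃ q : G.Walk u v, IsInducedPath q ∧ ∀ x ∈ q.support, x ∈ D := by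
  obtain ⟨q, hq⟩ := (p.induce D hp).reachable.exists_walk_length_eq_dist
  refine ⟨_, (isInducedPath_of_length_eq_dist hq).map_induce, fun x hx => ?_⟩
  obtain ⟨x, -, rfl⟩ := List.mem_map.1 (Walk.support_map _ q ▸ hx)
  exact x.2

end Walks

variable {G : SimpleGraph V} {u v x y : V}

lemma subset_closedNbhd (A : Set V) : A ⊆ closedNbhd G A := Set.subset_union_left

lemma closedNbhd_union (A B : Set V) : closedNbhd G (A ∪ B) = closedNbhd G A ∪ closedNbhd G B := by
  ext x
  simp only [closedNbhd, Set.mem_union, Set.mem_ofPred_eq, or_and_right, exists_or]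
  exact or_or_or_comm

lemma closedNbhd_mono {A B : Set V} (hAB : A ⊆ B) : closedNbhd G A ⊆ closedNbhd G B := by
  rw [← Set.union_eq_self_of_subset_left hAB, closedNbhd_union]
  exact Set.subset_union_left

lemma closedNbhd_union_sdiff {A B : Set V} (hAB : A ⊆ B) :
    closedNbhd G A ∪ closedNbhd G (B \ A) = closedNbhd G B := by
  rw [← closedNbhd_union, Set.union_sdiff_cancel hAB]

lemma mem_closedNbhd_of_adj {A : Set V} (hu : u ∈ A) (huv : G.Adj u v) : v ∈ closedNbhd G A :=
  .inr ⟨u, hu, huv⟩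

lemma mem_closedNbhd_singleton : v ∈ closedNbhd G {u} ↔ v = u ∨ G.Adj u v := by
  simp [closedNbhd]

lemma closedNbhd_support (p : G.Walk u v) :
    closedNbhd G {u} ∪ closedNbhd G ({x | x ∈ p.support} \ {u}) =
      closedNbhd G {x | x ∈ p.support} :=
  closedNbhd_union_sdiff (by simp)

namespace ReachOutside

variable {S T : Set V} {z : V}

lemma refl (hu : u ∉ S) : ReachOutside G S u u := ⟨.nil, by simpa using hu⟩

lemma symm (h : ReachOutside G S u v) : ReachOutside G S v u := by
  obtain ⟨p, hp⟩ := h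
  exact ⟨p.reverse, by simpa using hp⟩

lemma trans (huv : ReachOutside G S u v) (hvz : ReachOutside G S v z) : ReachOutside G S u z := by
  obtain ⟨p, hp⟩ := huv
  obtain ⟨q, hq⟩ := hvz
  exact ⟨p.append q, fun x hx => ((p.mem_support_append_iff q).1 hx).elim (hp x) (hq x)⟩

lemma anti (hST : S ⊆ T) (h : ReachOutside G T u v) : ReachOutside G S u v := by
  obtain ⟨p, hp⟩ := h
  exact ⟨p, fun x hx hxS => hp x hx (hST hxS)⟩

lemma left_notMem (h : ReachOutside G S u v) : u ∉ S := by
  obtain ⟨p, hp⟩ := h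
  exact hp u p.start_mem_support

lemma cons (huv : G.Adj u v) (hu : u ∉ S) (h : ReachOutside G S v z) : ReachOutside G S u z := by
  obtain ⟨p, hp⟩ := h
  exact ⟨p.cons huv, by simpa using ⟨hu, hp⟩⟩

lemma exists_walk_forall_reachOutside (h : ReachOutside G S u v) :
    ∃ p : G.Walk u v, ∀ x ∈ p.support, ReachOutside G S x v := by
  classical
  obtain ⟨p, hp⟩ := h
  exact ⟨p, fun x hx => ⟨p.dropUntil x hx,
    fun y hy => hp y (p.support_dropUntil_subset_support hx hy)⟩⟩

lemma exists_adj_boundary {A : Set V} (h : ReachOutside G S u v) (hu : u ∈ A) (hv : v ∉ A) :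
    ∃ s ∈ A, ∃ t ∉ A, G.Adj s t ∧ t ∉ S := by
  obtain ⟨p, hp⟩ := h
  obtain ⟨d, hd, hfst, hsnd⟩ := p.exists_boundary_dart A hu hv
  exact ⟨d.fst, hfst, d.snd, hsnd, d.adj, hp _ (p.dart_snd_mem_support_of_mem_darts hd)⟩

end ReachOutside

section Weights

variable [Finite V] {w : V → ℝ} {S T : Set V} {a b : V}

lemma setWeight_mono (hw : ∀ v, 0 ≤ w v) {A B : Set V} (hAB : A ⊆ B) :
    setWeight w A ≤ setWeight w B :=
  Finset.sum_le_sum_of_subset_of_nonneg (Set.Finite.toFinset_subset_toFinset.2 hAB)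
    fun v _ _ => hw v

lemma setWeight_union {A B : Set V} (hAB : Disjoint A B) :
    setWeight w (A ∪ B) = setWeight w A + setWeight w B := by
  classical
  unfold setWeight
  rw [← Finset.sum_union (by simpa using hAB)]
  congr 1
  ext x
  simp

/-- `a` lies outside `S`, in a component of `G - S` carrying more than half of the total weight. -/
def IsHeavyOutside (G : SimpleGraph V) (w : V → ℝ) (S : Set V) (a : V) : Prop :=
  a ∉ S ∧ setWeight w (Set.univ : Set V) / 2 < setWeight w {u | ReachOutside G S u a}

lemma not_isBalancedSep_iff : ¬ IsBalancedSep G w S ↔ ∃ a, IsHeavyOutside G w S a := by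
  simp [IsBalancedSep, IsHeavyOutside]

lemma IsBalancedSep.mono (hw : ∀ v, 0 ≤ w v) (hS : IsBalancedSep G w S) (hST : S ⊆ T) :
    IsBalancedSep G w T := fun v hv =>
  (setWeight_mono hw fun _ hu => hu.anti hST).trans (hS v fun hvS => hv (hST hvS))

namespace IsHeavyOutside

lemma exists_reachOutside (hw : ∀ v, 0 ≤ w v) (ha : IsHeavyOutside G w S a)
    (hb : IsHeavyOutside G w T b) : ∃ z, ReachOutside G S z a ∧ ReachOutside G T z b := by
  by_contra! hdisj
  have hAB : Disjoint {z | ReachOutside G S z a} {z | ReachOutside G T z b} :=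
    Set.disjoint_left.2 hdisj
  have htotal := setWeight_mono hw
    (Set.subset_univ ({z | ReachOutside G S z a} ∪ {z | ReachOutside G T z b}))
  linarith [setWeight_union (w := w) hAB, ha.2, hb.2]

lemma exists_mem_of_isBalancedSep (hw : ∀ v, 0 ≤ w v) (ha : IsHeavyOutside G w S a)
    (hT : IsBalancedSep G w T) : ∃ x ∈ T, ReachOutside G S x a := by
  by_contra! hdisj
  have hsub : {u | ReachOutside G S u a} ⊆ {u | ReachOutside G T u a} := by
    intro u hu
    obtain ⟨p, hp⟩ := hu.exists_walk_forall_reachOutside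
    exact ⟨p, fun x hx hxT => hdisj x hxT (hp x hx)⟩
  have hlight := hT a fun haT => hdisj a haT (.refl ha.1)
  linarith [setWeight_mono hw hsub, ha.2]

/-- Outside `T` no walk leaves `I`, so a heavy component of `G - T` would lie either inside `I` or
off `T ∪ I`. It meets both the balanced separator `T ∪ I` and the component of `a`. -/
lemma isBalancedSep_of_union {I : Set V} (hw : ∀ v, 0 ≤ w v) (ha : IsHeavyOutside G w S a)
    (hIS : I ⊆ S) (hTI : IsBalancedSep G w (T ∪ I)) (hI : closedNbhd G I ⊆ T ∪ I) :
    IsBalancedSep G w T := by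
  by_contra hT
  obtain ⟨b, hb⟩ := not_isBalancedSep_iff.1 hT
  obtain ⟨x, hx, hxb⟩ := hb.exists_mem_of_isBalancedSep hw hTI
  have hxI : x ∈ I := hx.resolve_left hxb.left_notMem
  obtain ⟨z, hza, hzb⟩ := ha.exists_reachOutside hw hb
  have hzI : z ∉ I := fun hzI => hza.left_notMem (hIS hzI)
  obtain ⟨s, hs, t, ht, hst, htT⟩ := (hxb.trans hzb.symm).exists_adj_boundary hxI hzI
  exact (hI (mem_closedNbhd_of_adj hs hst)).elim htT ht

end IsHeavyOutside

end Weights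

lemma isInducedCycle_of_isCycle {c : G.Walk u u} (hc : c.IsCycle) (hchord : c.IsChordless) :
    IsInducedCycle G {x | x ∈ c.support} := by
  refine ⟨c.connected_induce_support, fun x hx => ?_⟩
  rw [← hc.ncard_neighborSet_toSubgraph_eq_two hx]
  congr 1
  ext y
  rw [Subgraph.mem_neighborSet, Walk.adj_toSubgraph_iff_mem_edges]
  exact ⟨fun h => hchord.mem_edges hx h.2 h.1,
    fun h => ⟨c.adj_of_mem_edges h, c.snd_mem_support_of_mem_edges h⟩⟩

lemma isInducedCycle_append {p : G.Walk u v} {q : G.Walk v u} (hp : IsInducedPath p)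
    (hq : IsInducedPath q) (hlen : 2 ≤ p.length)
    (hpq : ∀ x ∈ q.support, x ∈ closedNbhd G ({x | x ∈ p.support} \ {u, v}) → x = u ∨ x = v) :
    IsInducedCycle G {x | x ∈ (p.append q).support} ∧
      4 ≤ {x | x ∈ (p.append q).support}.ncard := by
  have huv := hp.two_le_length_iff.1 hlen
  have hqlen : 2 ≤ q.length := hq.two_le_length_iff.2 ⟨huv.1.symm, fun h => huv.2 h.symm⟩
  have hcommon : ∀ x ∈ p.support, x ∈ q.support → x = u ∨ x = v := by
    intro x hxp hxq
    by_contra hx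
    exact hx (hpq x hxq (subset_closedNbhd _ ⟨hxp, hx⟩))
  have hdisj : p.support.tail.Disjoint q.support.tail := by
    intro x hxp hxq
    rcases hcommon x (List.mem_of_mem_tail hxp) (List.mem_of_mem_tail hxq) with rfl | rfl
    · exact start_notMem_tail_support hp.isPath hxp
    · exact start_notMem_tail_support hq.isPath hxq
  have hcycle : (p.append q).IsCycle := hp.isPath.isCycle_append hq.isPath hdisj (.inl hlen)
  have hchord : (p.append q).IsChordless := by
    refine isChordless_append hp.isChordless hq.isChordless fun x hx y hy hxy => ?_
    by_contra! hxy'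
    have hxI : x ∉ ({u, v} : Set V) := by
      rintro (rfl | rfl)
      exacts [hxy'.1 q.end_mem_support, hxy'.1 q.start_mem_support]
    rcases hpq y hy (mem_closedNbhd_of_adj ⟨hx, hxI⟩ hxy) with rfl | rfl
    exacts [hxy'.2 p.start_mem_support, hxy'.2 p.end_mem_support]
  refine ⟨isInducedCycle_of_isCycle hcycle hchord, ?_⟩
  rw [ncard_support_of_isCycle hcycle, Walk.length_append]
  omega

lemma exists_isInducedCycle_of_reachOutside {p : G.Walk u v} (hp : IsInducedPath p)
    (hlen : 2 ≤ p.length) (hux : G.Adj u x) (hvy : G.Adj v y)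
    (hxy : ReachOutside G (closedNbhd G ({x | x ∈ p.support} \ {u, v})) x y) :
    ∃ C, IsInducedCycle G C ∧ 4 ≤ C.ncard ∧ {x | x ∈ p.support} ⊆ C ∧
      C ∩ closedNbhd G ({x | x ∈ p.support} \ {u, v}) ⊆ {x | x ∈ p.support} := by
  obtain ⟨r, hr⟩ := hxy
  obtain ⟨q, hq, hqN⟩ := exists_isInducedPath_support_subset
    (D := {z | z ∈ closedNbhd G ({x | x ∈ p.support} \ {u, v}) → z = u ∨ z = v})
    ((r.reverse.concat hux.symm).cons hvy) (by
      simp only [Walk.support_cons, Walk.support_concat, Walk.support_reverse, List.mem_cons,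
        List.mem_append, List.mem_reverse]
      grind)
  obtain ⟨hC, hcard⟩ := isInducedCycle_append hp hq hlen hqN
  refine ⟨_, hC, hcard, fun z hz => p.support_subset_support_append_left q hz, ?_⟩
  rintro z ⟨hz, hzN⟩
  rcases (p.mem_support_append_iff q).1 hz with hzp | hzq
  · exact hzp
  · rcases hqN z hzq hzN with rfl | rfl
    exacts [p.start_mem_support, p.end_mem_support]

section Gyarfas

variable [Finite V] {w : V → ℝ}

/-- An induced path as it is grown in the argument of Gyárfás: some heavy component outside the
closed neighbourhood of all its vertices but the first touches the closed neighbourhood of the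
first. -/
structure IsGyarfasPath (w : V → ℝ) (p : G.Walk u v) : Prop where
  isInducedPath : IsInducedPath p
  exists_reachOutside : ∃ b, IsHeavyOutside G w (closedNbhd G ({x | x ∈ p.support} \ {u})) b ∧
    ∃ x ∈ closedNbhd G {u}, ReachOutside G (closedNbhd G ({x | x ∈ p.support} \ {u})) x b

lemma IsGyarfasPath.exists_cons (hw : ∀ v, 0 ≤ w v) {p : G.Walk u v} (hp : IsGyarfasPath w p)
    (hbal : ¬ IsBalancedSep G w (closedNbhd G {x | x ∈ p.support})) :
    ∃ t, ∃ htu : G.Adj t u, IsGyarfasPath w (p.cons htu) := by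
  obtain ⟨b, hb, x, hxu, hxb⟩ := hp.exists_reachOutside
  obtain ⟨b', hb'⟩ := not_isBalancedSep_iff.1 hbal
  obtain ⟨z, hzb, hzb'⟩ := hb.exists_reachOutside hw hb'
  have hxP : x ∈ closedNbhd G {x | x ∈ p.support} := closedNbhd_support p ▸ .inl hxu
  obtain ⟨s, hsb', t, htb', hst, htS⟩ := (hzb.trans hxb.symm).exists_adj_boundary
    (A := {y | ReachOutside G (closedNbhd G {x | x ∈ p.support}) y b'}) hzb'
    fun hxb' => hxb'.left_notMem hxP
  have htP : t ∈ closedNbhd G {x | x ∈ p.support} := by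
    by_contra htP
    exact htb' (.cons hst.symm htP hsb')
  have htne : t ≠ u := by
    rintro rfl
    exact hsb'.left_notMem (mem_closedNbhd_of_adj p.start_mem_support hst.symm)
  have hut : G.Adj u t := by
    rw [← closedNbhd_support] at htP
    exact (mem_closedNbhd_singleton.1 (htP.resolve_right htS)).resolve_left htne
  have ht : t ∉ p.support := fun ht => htS (subset_closedNbhd _ ⟨ht, htne⟩)
  have honly : ∀ y ∈ p.support, G.Adj t y → y = u := by
    intro y hy hty
    by_contra hyu
    exact htS (mem_closedNbhd_of_adj ⟨hy, hyu⟩ hty.symm)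
  refine ⟨t, hut.symm, hp.isInducedPath.cons hut.symm ht honly, b', ?_⟩
  rw [support_cons_sdiff_start hut.symm ht]
  exact ⟨hb', s, mem_closedNbhd_of_adj rfl hst.symm, hsb'⟩

lemma exists_isInducedPath_isBalancedSep [Nonempty V] (G : SimpleGraph V) (hw : ∀ v, 0 ≤ w v) :
    ∃ (u v : V) (p : G.Walk u v),
      IsInducedPath p ∧ IsBalancedSep G w (closedNbhd G {x | x ∈ p.support}) := by
  by_contra! hnone
  have exists_isGyarfasPath (n : ℕ) :
      ∃ (u v : V) (p : G.Walk u v), IsGyarfasPath w p ∧ p.length = n := by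
    induction n with
    | zero =>
      have hempty : ¬ IsBalancedSep G w ∅ := fun h =>
        hnone _ _ _ (isInducedPath_nil (u := Classical.arbitrary V))
          (h.mono hw (Set.empty_subset _))
      obtain ⟨b, hb⟩ := not_isBalancedSep_iff.1 hempty
      have hN : closedNbhd G ({x | x ∈ (.nil : G.Walk b b).support} \ {b}) = ∅ := by
        simp [closedNbhd]
      refine ⟨b, b, .nil, ⟨isInducedPath_nil, b, ?_⟩, rfl⟩
      rw [hN]
      exact ⟨hb, b, subset_closedNbhd _ rfl, .refl hb.1⟩
    | succ n ih =>
      obtain ⟨u, v, p, hp, rfl⟩ := ih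
      obtain ⟨t, htu, hcons⟩ := hp.exists_cons hw (hnone u v p hp.isInducedPath)
      exact ⟨t, v, p.cons htu, hcons, p.length_cons htu⟩
  have := Fintype.ofFinite V
  obtain ⟨u, v, p, hp, hlen⟩ := exists_isGyarfasPath (Fintype.card V)
  exact hp.isInducedPath.isPath.length_lt.ne hlen

/-- A shortest induced path whose closed neighbourhood is a `w`-balanced separator. -/
structure IsMinBalancedPath (w : V → ℝ) (p : G.Walk u v) : Prop where
  isInducedPath : IsInducedPath p
  isBalancedSep : IsBalancedSep G w (closedNbhd G {x | x ∈ p.support})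
  length_le : ∀ ⦃x y : V⦄ (q : G.Walk x y), IsInducedPath q →
    IsBalancedSep G w (closedNbhd G {x | x ∈ q.support}) → p.length ≤ q.length

lemma exists_isMinBalancedPath [Nonempty V] (G : SimpleGraph V) (hw : ∀ v, 0 ≤ w v) :
    ∃ (u v : V) (p : G.Walk u v), IsMinBalancedPath w p := by
  classical
  have hex : ∃ (n : ℕ) (u v : V) (p : G.Walk u v), IsInducedPath p ∧
      IsBalancedSep G w (closedNbhd G {x | x ∈ p.support}) ∧ p.length = n := by
    obtain ⟨u, v, p, hp, hbal⟩ := exists_isInducedPath_isBalancedSep G hw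
    exact ⟨p.length, u, v, p, hp, hbal, rfl⟩
  obtain ⟨u, v, p, hp, hbal, hlen⟩ := Nat.find_spec hex
  exact ⟨u, v, p, hp, hbal, fun x y q hq hqbal =>
    hlen.trans_le (Nat.find_min' hex ⟨x, y, q, hq, hqbal, rfl⟩)⟩

namespace IsMinBalancedPath

variable {p : G.Walk u v}

lemma reverse (hp : IsMinBalancedPath w p) : IsMinBalancedPath w p.reverse where
  isInducedPath := hp.isInducedPath.reverse
  isBalancedSep := by simpa using hp.isBalancedSep
  length_le := by simpa using hp.length_le

lemma exists_adj_start (hw : ∀ v, 0 ≤ w v) (hp : IsMinBalancedPath w p) (hnil : ¬ p.Nil) :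
    ∃ a x, IsHeavyOutside G w (closedNbhd G ({x | x ∈ p.support} \ {u})) a ∧ G.Adj u x ∧
      ReachOutside G (closedNbhd G ({x | x ∈ p.support} \ {u})) x a := by
  have hunbal : ¬ IsBalancedSep G w (closedNbhd G ({x | x ∈ p.support} \ {u})) := by
    intro hbal
    cases p with
    | nil => exact hnil .nil
    | cons h p =>
      have hu : u ∉ p.support := ((Walk.cons_isPath_iff h p).1 hp.isInducedPath.isPath).2
      rw [support_cons_sdiff_start h hu] at hbal
      have := hp.length_le p hp.isInducedPath.of_cons hbal
      rw [Walk.length_cons] at this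
      omega
  obtain ⟨a, ha⟩ := not_isBalancedSep_iff.1 hunbal
  obtain ⟨x, hx, hxa⟩ := ha.exists_mem_of_isBalancedSep hw hp.isBalancedSep
  rw [← closedNbhd_support] at hx
  have hu : u ∈ closedNbhd G ({x | x ∈ p.support} \ {u}) :=
    mem_closedNbhd_of_adj ⟨p.getVert_mem_support 1, (p.adj_snd hnil).ne'⟩ (p.adj_snd hnil).symm
  have hxu : x ≠ u := by
    rintro rfl
    exact hxa.left_notMem hu
  have hux : G.Adj u x :=
    (mem_closedNbhd_singleton.1 (hx.resolve_right hxa.left_notMem)).resolve_left hxu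
  exact ⟨a, x, ha, hux, hxa⟩

lemma exists_isInducedCycle (hw : ∀ v, 0 ≤ w v) (hp : IsMinBalancedPath w p)
    (hlen : 2 ≤ p.length) :
    ∃ C, IsInducedCycle G C ∧ 4 ≤ C.ncard ∧ {x | x ∈ p.support} ⊆ C ∧
      C ∩ closedNbhd G ({x | x ∈ p.support} \ {u, v}) ⊆ {x | x ∈ p.support} := by
  have hnil : ¬ p.Nil := Walk.not_nil_iff_lt_length.2 (by omega)
  obtain ⟨a, x, ha, hux, hxa⟩ := hp.exists_adj_start hw hnil
  obtain ⟨b, y, hb, hvy, hyb⟩ := hp.reverse.exists_adj_start hw (by simpa using hnil)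
  simp only [Walk.support_reverse, List.mem_reverse] at hb hyb
  obtain ⟨z, hza, hzb⟩ := ha.exists_reachOutside hw hb
  refine exists_isInducedCycle_of_reachOutside hp.isInducedPath hlen hux hvy
    (((hxa.trans hza.symm).anti ?_).trans ((hzb.trans hyb.symm).anti ?_)) <;>
  exact closedNbhd_mono (Set.sdiff_subset_sdiff_right (by simp))

lemma isBalancedSep_endpoints (hw : ∀ v, 0 ≤ w v) (hp : IsMinBalancedPath w p) (hnil : ¬ p.Nil)
    (hI : closedNbhd G ({x | x ∈ p.support} \ {u, v}) ⊆ {x | x ∈ p.support}) :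
    IsBalancedSep G w (closedNbhd G {u, v}) := by
  obtain ⟨a, -, ha, -⟩ := hp.exists_adj_start hw hnil
  have hends : {u, v} ⊆ {x | x ∈ p.support} := by simp [Set.insert_subset_iff]
  have hIT : closedNbhd G ({x | x ∈ p.support} \ {u, v}) ⊆
      closedNbhd G {u, v} ∪ ({x | x ∈ p.support} \ {u, v}) := by
    refine hI.trans ?_
    rw [← Set.sdiff_subset_iff]
    exact Set.sdiff_subset_sdiff_right (subset_closedNbhd _)
  refine ha.isBalancedSep_of_union hw ?_ (hp.isBalancedSep.mono hw ?_) hIT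
  · exact (Set.sdiff_subset_sdiff_right (by simp)).trans (subset_closedNbhd _)
  · rw [← closedNbhd_union_sdiff hends]
    exact Set.union_subset Set.subset_union_left hIT

end IsMinBalancedPath

end Gyarfas

/-- Gyárfás cycle-plus-vertex. -/
theorem gyarfas_cycle_plus_vertex [Finite V] [Nonempty V] (G : SimpleGraph V)
    (w : V → ℝ) (hw0 : ∀ v, 0 ≤ w v) :
    (∃ C : Set V, IsInducedCycle G C ∧ 4 ≤ C.ncard ∧
      ∃ p, p ∉ C ∧ IsBalancedSep G w (closedNbhd G (C ∪ {p}))) ∨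
    (∃ p q : V, IsBalancedSep G w (closedNbhd G {p, q})) := by
  obtain ⟨u, v, p, hp⟩ := exists_isMinBalancedPath G hw0
  by_cases hlen : 2 ≤ p.length
  · have hnil : ¬ p.Nil := Walk.not_nil_iff_lt_length.2 (by omega)
    obtain ⟨C, hC, hcard, hpC, hCI⟩ := hp.exists_isInducedCycle hw0 hlen
    by_cases hVC : C = Set.univ
    · rw [hVC, Set.univ_inter] at hCI
      exact .inr ⟨u, v, hp.isBalancedSep_endpoints hw0 hnil hCI⟩
    · obtain ⟨x, hx⟩ := (Set.ne_univ_iff_exists_notMem C).1 hVC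
      exact .inl ⟨C, hC, hcard, x, hx,
        hp.isBalancedSep.mono hw0 (closedNbhd_mono (hpC.trans Set.subset_union_left))⟩
  · exact .inr ⟨u, v, hp.isBalancedSep.mono hw0
      (closedNbhd_mono (support_subset_of_length_le_one (by omega)))⟩
end

section
/- Let G be a cobweb with presentation (C, I) and σ a wedge-selection for (G, C, I). If {u, v} ⊆ I is a good pair (with respect to σ), then each connected component P of σ(u) ∩ σ(v) ∩ C is separated from C - V(P) in G by ∂σ(u) ∪ ∂σ(v), the union of the barriers of σ(u) and σ(v). -/
open SimpleGraph

variable {V : Type}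

/-- `G` is a cobweb with presentation `(C, I)`. -/
def IsCobweb (G : SimpleGraph V) (C I : Set V) : Prop :=
  IsInducedCycle G C ∧ I = Cᶜ ∧ I.Nonempty ∧
  (∀ u ∈ I, ∀ v ∈ I, ¬ G.Adj u v) ∧
  (∀ v : V, 2 ≤ (G.neighborSet v).ncard) ∧
  ∀ u ∈ I, ∀ v ∈ I, u ≠ v → ¬ G.neighborSet u ⊆ G.neighborSet v

/-- A subgraph is a cycle: its coercion is connected and 2-regular. -/
def IsCycleSubgraph (G : SimpleGraph V) (W : G.Subgraph) : Prop :=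
  W.coe.Connected ∧ ∀ x ∈ W.verts, (W.neighborSet x).ncard = 2

/-- `W` is a wedge of `(G, C, I)` anchored in `v`: a cycle containing exactly one
vertex of `I`, namely `v`, and exactly two neighbours of `v`. -/
def IsWedge (G : SimpleGraph V) (C I : Set V) (W : G.Subgraph) (v : V) : Prop :=
  IsCycleSubgraph G W ∧ v ∈ I ∧ W.verts ∩ I = {v} ∧
  (W.verts ∩ G.neighborSet v).ncard = 2

/-- `u` attaches to the wedge `W`. -/
def Attaches (G : SimpleGraph V) (u : V) (W : G.Subgraph) : Prop :=
  u ∉ W.verts ∧ G.neighborSet u ⊆ W.verts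

/-- The union of components of `G - V(W)` containing vertices of `C`
(for a non-co-trivial wedge this is the unique such component). -/
def outerPart (G : SimpleGraph V) (C : Set V) (W : G.Subgraph) : Set V :=
  {d | d ∉ W.verts ∧ ∃ c ∈ C, c ∉ W.verts ∧ ReachOutside G W.verts d c}

open Classical in
/-- The barrier `∂W` of a wedge `W` anchored in `v`. -/
noncomputable def barrier (G : SimpleGraph V) (C : Set V) (W : G.Subgraph) (v : V) : Set V :=
  if C ⊆ W.verts then G.neighborSet v
  else {x | x ∉ outerPart G C W ∧ ∃ d ∈ outerPart G C W, G.Adj d x}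

/-- `W₁` (a wedge anchored in `u`) improves `W₂` (a wedge anchored in `v`):
`W₁ - u` is a proper subgraph of `W₂ - v`. -/
def Improves (G : SimpleGraph V) (W₁ : G.Subgraph) (u : V) (W₂ : G.Subgraph) (v : V) : Prop :=
  W₁.deleteVerts {u} ≤ W₂.deleteVerts {v} ∧ W₁.deleteVerts {u} ≠ W₂.deleteVerts {v}

/-- A vertex is good w.r.t. a wedge-selection `σ` if it is minimal in the
improvement order. -/
def GoodVertex (G : SimpleGraph V) (I : Set V) (σ : V → G.Subgraph) (u : V) : Prop :=
  u ∈ I ∧ ∀ x ∈ I, ¬ Improves G (σ x) x (σ u) u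

/-!
For a wedge `W` anchored in `u`, the edges of `C` outside `W` form a path, the co-arc, whose ends
are the two neighbours of `u` in `W` and whose inner vertices avoid `W`.  Suppose that `x` attaches
to `σ u` and consider the co-arcs of `σ x` and `σ u`.  If they share an edge, then, because the ends
of the first one are neighbours of `x` and hence lie in `σ u`, the second one is contained in the
first, so `σ x - x` is contained in `σ u - u`.  As `u` is good, equality holds, and then every
neighbour of `x` is an end of the common co-arc, contradicting `N(x) ⊄ N(u)`.  So the co-arc of
`σ x` is a path in `σ u` through all neighbours of `x`.

A path leaving `P` outside the barriers cannot do so along an edge of `C`, since a wedge is left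
along `C` only through a neighbour of its anchor, which belongs to the barrier.  If it leaves `P`
through some `y ∉ C`, then `y` attaches to both `σ u` and `σ v`, so the co-arc of `σ y` lies in
`σ u ∩ σ v ∩ C` and takes all neighbours of `y` back into `P`.
-/

theorem separates_of_forall_adj {G : SimpleGraph V} {S A B T : Set V} (hA : A ⊆ T)
    (hB : Disjoint T B) (h : ∀ a ∈ T, ∀ b ∉ T, G.Adj a b → a ∈ S) : Separates G S A B := by
  intro a ha b hb p
  obtain ⟨d, hd, hfst, hsnd⟩ :=
    p.exists_boundary_dart T (hA ha) (hB.notMem_of_mem_right hb)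
  exact ⟨d.fst, p.dart_fst_mem_support_of_mem_darts hd, h _ hfst _ hsnd d.adj⟩

theorem mem_of_reachable_of_forall_adj {α : Type*} {H : SimpleGraph α} {T : Set α}
    (hT : ∀ a ∈ T, ∀ b, H.Adj a b → b ∈ T) {a b : α} (hab : H.Reachable a b) (ha : a ∈ T) :
    b ∈ T := by
  obtain ⟨p⟩ := hab
  by_contra hb
  obtain ⟨d, -, hfst, hsnd⟩ := p.exists_boundary_dart T ha hb
  exact hsnd (hT _ hfst _ d.adj)

theorem mem_image_supp_of_reachable_spanningCoe {α : Type*} {G : SimpleGraph α} {H : G.Subgraph}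
    {P : H.coe.ConnectedComponent} {a b : α} (ha : a ∈ Subtype.val '' P.supp)
    (hab : H.spanningCoe.Reachable a b) : b ∈ Subtype.val '' P.supp := by
  refine mem_of_reachable_of_forall_adj (fun c hc d hcd ↦ ?_) hab ha
  have hcd' : H.Adj c d := hcd
  exact ConnectedComponent.mem_coe_supp_of_adj hc hcd'.snd_mem hcd'

theorem separates_image_supp {G : SimpleGraph V} {H : G.Subgraph} {S C : Set V}
    (hC : ∀ a ∈ H.verts, a ∉ S → ∀ b ∈ C, G.Adj a b → H.Adj a b)
    (hCc : ∀ a ∈ H.verts, a ∉ S → ∀ y ∉ C, G.Adj a y →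
      ∀ b, G.Adj y b → H.spanningCoe.Reachable a b)
    (P : H.coe.ConnectedComponent) :
    Separates G S (Subtype.val '' P.supp) (C \ (Subtype.val '' P.supp)) := by
  set A : Set V := Subtype.val '' P.supp
  refine separates_of_forall_adj (T := A ∪ {y | y ∉ C ∧ G.neighborSet y ⊆ A})
    Set.subset_union_left ?_ ?_
  · rw [Set.disjoint_left]
    rintro y (hy | hy) hyB
    exacts [hyB.2 hy, hy.1 hyB.1]
  · rintro a (ha | ha) y hy hay
    · have haH : a ∈ H.verts := by
        obtain ⟨a, -, rfl⟩ := ha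
        exact a.2
      by_contra haS
      refine hy ?_
      by_cases hyC : y ∈ C
      · exact .inl (mem_image_supp_of_reachable_spanningCoe ha
          (Adj.reachable (hC a haH haS y hyC hay)))
      · exact .inr ⟨hyC, fun b hyb ↦ mem_image_supp_of_reachable_spanningCoe ha
          (hCc a haH haS y hyC hay b hyb)⟩
    · exact absurd (.inl (ha.2 hay)) hy

theorem exists_ne_reachable_odd_ncard_neighborSet {α : Type*} [Finite α] {H : SimpleGraph α}
    {a : α} (ha : Odd (H.neighborSet a).ncard) :
    ∃ b ≠ a, H.Reachable a b ∧ Odd (H.neighborSet b).ncard := by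
  classical
  have := Fintype.ofFinite α
  have ncard_eq_degree (b : α) : (H.neighborSet b).ncard = H.degree b := by
    rw [Set.ncard_eq_toFinset_card', ← card_neighborFinset_eq_degree, neighborFinset]
  let D : Set α := {b | H.Reachable a b}
  have degree_induce (b : D) : (H.induce D).degree b = H.degree b :=
    degree_induce_of_neighborSet_subset fun _ hc ↦ b.2.trans (Adj.reachable hc)
  simp only [ncard_eq_degree] at ha ⊢
  obtain ⟨b, hne, hb⟩ := (H.induce D).exists_ne_odd_degree_of_exists_odd_degree
    ⟨a, Reachable.refl a⟩ (by rwa [degree_induce])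
  exact ⟨b, fun h ↦ hne (Subtype.ext h), b.2, by rwa [degree_induce] at hb⟩

theorem mem_of_adj_of_isIndepSet_compl {α : Type*} {G : SimpleGraph α} {C : Set α}
    (hind : G.IsIndepSet Cᶜ) {x y : α} (hx : x ∉ C) (hxy : G.Adj x y) : y ∈ C := by
  by_contra hy
  exact hind hx hy hxy.ne hxy

/-- The edges of `C` outside `W`.  When `W` is a wedge these are the edges of the path of `C`
complementary to `W`; all other vertices are kept as isolated vertices. -/
def coArc (G : SimpleGraph V) (C : Set V) (W : G.Subgraph) : SimpleGraph V :=
  ((⊤ : G.Subgraph).induce C).spanningCoe \ W.spanningCoe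

section CoArc

variable {G : SimpleGraph V} {C : Set V} {W X : G.Subgraph} {y z : V}

theorem coArc_adj : (coArc G C W).Adj y z ↔ y ∈ C ∧ z ∈ C ∧ G.Adj y z ∧ ¬ W.Adj y z := by
  simp [coArc, and_assoc]

theorem coArc_adj_of_notMem (hy : y ∈ C) (hz : z ∈ C) (hyz : G.Adj y z) (hyW : y ∉ W.verts) :
    (coArc G C W).Adj y z :=
  coArc_adj.2 ⟨hy, hz, hyz, fun h ↦ hyW h.fst_mem⟩

theorem adj_of_coArc_le_coArc (h : coArc G C W ≤ coArc G C X) (hy : y ∈ C) (hz : z ∈ C)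
    (hyz : X.Adj y z) : W.Adj y z := by
  by_contra hW
  exact (coArc_adj.1 (h (coArc_adj.2 ⟨hy, hz, hyz.adj_sub, hW⟩))).2.2.2 hyz

end CoArc

namespace IsInducedCycle

variable {G : SimpleGraph V} {C : Set V} {y : V}

theorem finite_neighborSet_inter (hC : IsInducedCycle G C) (hy : y ∈ C) :
    (G.neighborSet y ∩ C).Finite :=
  Set.finite_of_ncard_pos (by simp [hC.2 y hy])

theorem exists_adj (hC : IsInducedCycle G C) (hy : y ∈ C) : ∃ z ∈ C, G.Adj y z := by
  obtain ⟨z, hyz, hz⟩ : (G.neighborSet y ∩ C).Nonempty :=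
    Set.nonempty_of_ncard_ne_zero (by simp [hC.2 y hy])
  exact ⟨z, hz, hyz⟩

end IsInducedCycle

namespace IsWedge

variable {G : SimpleGraph V} {C : Set V} {W X : G.Subgraph} {u x y z : V}

theorem anchor_notMem (hW : IsWedge G C Cᶜ W u) : u ∉ C := hW.2.1

theorem anchor_mem_verts (hW : IsWedge G C Cᶜ W u) : u ∈ W.verts :=
  (hW.2.2.1.ge rfl).1

theorem eq_anchor (hW : IsWedge G C Cᶜ W u) (hyW : y ∈ W.verts) (hy : y ∉ C) : y = u :=
  hW.2.2.1.le ⟨hyW, hy⟩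

theorem mem_of_adj_anchor (hW : IsWedge G C Cᶜ W u) (huy : W.Adj u y) : y ∈ C := by
  by_contra hy
  exact huy.ne.symm (hW.eq_anchor huy.snd_mem hy)

theorem adj_anchor_of_mem (hW : IsWedge G C Cᶜ W u) (hyW : y ∈ W.verts) (huy : G.Adj u y) :
    W.Adj u y := by
  have hsub : W.neighborSet u ⊆ W.verts ∩ G.neighborSet u :=
    fun _ h ↦ ⟨h.snd_mem, h.adj_sub⟩
  have hcard := hW.1.2 u hW.anchor_mem_verts
  have heq : W.neighborSet u = W.verts ∩ G.neighborSet u :=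
    Set.eq_of_subset_of_ncard_le hsub (by rw [hcard, hW.2.2.2])
      (Set.finite_of_ncard_pos (by simp [hW.2.2.2]))
  exact heq.ge ⟨hyW, huy⟩

theorem exists_adj_of_mem (hW : IsWedge G C Cᶜ W u) (hyW : y ∈ W.verts) : ∃ z ∈ C, W.Adj y z := by
  obtain ⟨z, hyz, hzu⟩ := Set.exists_ne_of_one_lt_ncard
    (s := W.neighborSet y) (by simp [hW.1.2 y hyW]) u
  exact ⟨z, by_contra fun hz ↦ hzu (hW.eq_anchor hyz.snd_mem hz), hyz⟩

theorem ncard_coArc_neighborSet_add (hC : IsInducedCycle G C) (hW : IsWedge G C Cᶜ W u)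
    (hy : y ∈ C) :
    ((coArc G C W).neighborSet y).ncard + (W.neighborSet y \ {u}).ncard = 2 := by
  have hsub : W.neighborSet y \ {u} ⊆ G.neighborSet y ∩ C := fun z hz ↦
    ⟨hz.1.adj_sub, by_contra fun hzC ↦ hz.2 (hW.eq_anchor hz.1.snd_mem hzC)⟩
  have hcoArc : (coArc G C W).neighborSet y =
      (G.neighborSet y ∩ C) \ (W.neighborSet y \ {u}) := by
    ext z
    have : z ∈ C → z ≠ u := fun hz h ↦ hW.anchor_notMem (h ▸ hz)
    simp only [mem_neighborSet, coArc_adj, Set.mem_sdiff, Set.mem_inter_iff,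
      Subgraph.mem_neighborSet, Set.mem_singleton_iff]
    tauto
  rw [hcoArc, Set.ncard_sdiff_add_ncard_of_subset hsub (hC.finite_neighborSet_inter hy), hC.2 y hy]

theorem ncard_coArc_neighborSet_of_notMem (hC : IsInducedCycle G C) (hW : IsWedge G C Cᶜ W u)
    (hy : y ∈ C) (hyW : y ∉ W.verts) : ((coArc G C W).neighborSet y).ncard = 2 := by
  have hempty : W.neighborSet y = ∅ := Set.eq_empty_of_forall_notMem fun _ h ↦ hyW h.fst_mem
  simpa [hempty] using hW.ncard_coArc_neighborSet_add hC hy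

theorem ncard_coArc_neighborSet_of_adj_anchor (hC : IsInducedCycle G C)
    (hW : IsWedge G C Cᶜ W u) (huy : W.Adj u y) :
    ((coArc G C W).neighborSet y).ncard = 1 := by
  have hadd := hW.ncard_coArc_neighborSet_add hC (hW.mem_of_adj_anchor huy)
  have hcard : (W.neighborSet y \ {u}).ncard = 1 := by
    rw [Set.ncard_sdiff_singleton_of_mem ((W.mem_neighborSet y u).2 huy.symm),
      hW.1.2 y huy.snd_mem]
  omega

theorem adj_anchor_of_coArc_adj (hC : IsInducedCycle G C) (hW : IsWedge G C Cᶜ W u)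
    (hyW : y ∈ W.verts) (hyz : (coArc G C W).Adj y z) : W.Adj u y := by
  by_contra huy
  have hy : y ∈ C := (coArc_adj.1 hyz).1
  have hadd := hW.ncard_coArc_neighborSet_add hC hy
  rw [Set.sdiff_singleton_eq_self (fun h ↦ huy h.symm), hW.1.2 y hyW] at hadd
  have hfin : ((coArc G C W).neighborSet y).Finite :=
    (hC.finite_neighborSet_inter hy).subset fun _ h ↦
      ⟨(coArc_adj.1 h).2.2.1, (coArc_adj.1 h).2.1⟩
  have hempty := (Set.ncard_eq_zero hfin).1 (by omega)
  exact hempty.le hyz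

theorem subsingleton_coArc_neighborSet (hC : IsInducedCycle G C) (hW : IsWedge G C Cᶜ W u)
    (hyW : y ∈ W.verts) : ((coArc G C W).neighborSet y).Subsingleton := by
  intro z hz
  obtain ⟨_, heq⟩ := Set.ncard_eq_one.1
    (hW.ncard_coArc_neighborSet_of_adj_anchor hC (hW.adj_anchor_of_coArc_adj hC hyW hz))
  exact (heq ▸ Set.subsingleton_singleton) hz

theorem exists_coArc_adj (hC : IsInducedCycle G C) (hW : IsWedge G C Cᶜ W u) (hy : y ∈ C)
    (huy : G.Adj u y) : ∃ z, (coArc G C W).Adj y z := by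
  by_cases hyW : y ∈ W.verts
  · exact Set.nonempty_of_ncard_ne_zero
      (ne_zero_of_eq_one <|
        hW.ncard_coArc_neighborSet_of_adj_anchor hC (hW.adj_anchor_of_mem hyW huy))
  · obtain ⟨z, hz, hyz⟩ := hC.exists_adj hy
    exact ⟨z, coArc_adj_of_notMem hy hz hyz hyW⟩

theorem coArc_reachable_of_adj_anchor [Finite V] (hC : IsInducedCycle G C)
    (hW : IsWedge G C Cᶜ W u) (huy : W.Adj u y) (huz : W.Adj u z) :
    (coArc G C W).Reachable y z := by
  rcases eq_or_ne y z with rfl | hyz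
  · rfl
  -- Only the neighbours of the anchor have odd degree in the co-arc.
  obtain ⟨w, hwy, hreach, hodd⟩ := exists_ne_reachable_odd_ncard_neighborSet
    (H := coArc G C W) (a := y) (by simp [hW.ncard_coArc_neighborSet_of_adj_anchor hC huy])
  obtain ⟨t, hwt⟩ := Set.nonempty_of_ncard_ne_zero hodd.pos.ne'
  have hwW : w ∈ W.verts := by
    by_contra hwW
    rw [hW.ncard_coArc_neighborSet_of_notMem hC (coArc_adj.1 hwt).1 hwW] at hodd
    exact absurd hodd (by decide)
  have huw : W.Adj u w := hW.adj_anchor_of_coArc_adj hC hwW hwt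
  have hpair : {y, z} = W.neighborSet u :=
    Set.eq_of_subset_of_ncard_le (Set.pair_subset huy huz)
      (by rw [hW.1.2 u hW.anchor_mem_verts, Set.ncard_pair hyz])
  rwa [← (hpair.ge huw).resolve_left hwy]

theorem coArc_reachable_anchor_neighbor_of_coArc_adj [Finite V] (hC : IsInducedCycle G C)
    (hW : IsWedge G C Cᶜ W u) {a b : V} (hab : (coArc G C W).Adj a b) (huy : W.Adj u y) :
    (coArc G C W).Reachable a y := by
  by_contra hay
  have hnotMem {c d : V} (hcd : (coArc G C W).Adj c d) (hac : (coArc G C W).Reachable a c) :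
      c ∉ W.verts := fun hcW ↦
    hay (hac.trans
      (hW.coArc_reachable_of_adj_anchor hC (hW.adj_anchor_of_coArc_adj hC hcW hcd) huy))
  let T : Set C := {c | (coArc G C W).Reachable a c ∧ (c : V) ∉ W.verts}
  have hT : ∀ c ∈ T, ∀ d, (G.induce C).Adj c d → d ∈ T := by
    rintro c ⟨hac, hcW⟩ d hcd
    have hcd' : (coArc G C W).Adj c d := coArc_adj_of_notMem c.2 d.2 hcd hcW
    have had := hac.trans hcd'.reachable
    exact ⟨had, hnotMem hcd'.symm had⟩
  have hyT : (⟨y, hW.mem_of_adj_anchor huy⟩ : C) ∈ T :=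
    mem_of_reachable_of_forall_adj hT (hC.1.preconnected ⟨a, (coArc_adj.1 hab).1⟩ _)
      ⟨.refl a, hnotMem hab (.refl a)⟩
  exact hay hyT.1

theorem coArc_reachable_of_coArc_adj [Finite V] (hC : IsInducedCycle G C) (hW : IsWedge G C Cᶜ W u)
    {a a' b b' : V} (ha : (coArc G C W).Adj a a') (hb : (coArc G C W).Adj b b') :
    (coArc G C W).Reachable a b := by
  obtain ⟨p, hup⟩ : (W.neighborSet u).Nonempty :=
    Set.nonempty_of_ncard_ne_zero (by simp [hW.1.2 u hW.anchor_mem_verts])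
  exact (hW.coArc_reachable_anchor_neighbor_of_coArc_adj hC ha hup).trans
    (hW.coArc_reachable_anchor_neighbor_of_coArc_adj hC hb hup).symm

theorem coArc_reachable_of_adj [Finite V] (hC : IsInducedCycle G C) (hind : G.IsIndepSet Cᶜ)
    (hW : IsWedge G C Cᶜ W u) (huy : G.Adj u y) (huz : G.Adj u z) :
    (coArc G C W).Reachable y z := by
  obtain ⟨_, hy⟩ :=
    hW.exists_coArc_adj hC (mem_of_adj_of_isIndepSet_compl hind hW.anchor_notMem huy) huy
  obtain ⟨_, hz⟩ :=
    hW.exists_coArc_adj hC (mem_of_adj_of_isIndepSet_compl hind hW.anchor_notMem huz) huz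
  exact hW.coArc_reachable_of_coArc_adj hC hy hz

theorem adj_or_adj_anchor (hC : IsInducedCycle G C) (hW : IsWedge G C Cᶜ W u) (hyW : y ∈ W.verts)
    (hy : y ∈ C) (hz : z ∈ C) (hyz : G.Adj y z) : W.Adj y z ∨ W.Adj u y := by
  by_contra! h
  exact h.2 (hW.adj_anchor_of_coArc_adj hC hyW (coArc_adj.2 ⟨hy, hz, hyz, h.1⟩))

theorem notMem_of_adj_anchor_of_coArc_adj [Finite V] (hC : IsInducedCycle G C)
    (hW : IsWedge G C Cᶜ W u) (hCW : ¬ C ⊆ W.verts) (huy : W.Adj u y)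
    (hyz : (coArc G C W).Adj y z) : z ∉ W.verts := by
  intro hzW
  obtain ⟨c, hc, hcW⟩ := Set.not_subset.1 hCW
  obtain ⟨d, hd, hcd⟩ := hC.exists_adj hc
  have hT : ∀ a ∈ ({y, z} : Set V), ∀ b, (coArc G C W).Adj a b → b ∈ ({y, z} : Set V) := by
    rintro a (rfl | rfl) b hab
    · exact .inr (hW.subsingleton_coArc_neighborSet hC huy.snd_mem hab hyz)
    · exact .inl (hW.subsingleton_coArc_neighborSet hC hzW hab hyz.symm)
  rcases mem_of_reachable_of_forall_adj hT
    (hW.coArc_reachable_of_coArc_adj hC hyz (coArc_adj_of_notMem hc hd hcd hcW))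
    (Set.mem_insert y {z}) with rfl | rfl
  exacts [hcW huy.snd_mem, hcW hzW]

theorem coArc_le_coArc_of_common_adj [Finite V] (hC : IsInducedCycle G C)
    (hW : IsWedge G C Cᶜ W u) (hX : IsWedge G C Cᶜ X x) (hXW : X.neighborSet x ⊆ W.verts)
    {a b : V} (habW : (coArc G C W).Adj a b) (habX : (coArc G C X).Adj a b) :
    coArc G C W ≤ coArc G C X := by
  have hstep {c d e : V} (hcdW : (coArc G C W).Adj c d) (hcdX : (coArc G C X).Adj c d)
      (hceW : (coArc G C W).Adj c e) : (coArc G C X).Adj c e := by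
    by_cases hcX : c ∈ X.verts
    · have hcW : c ∈ W.verts := hXW (hX.adj_anchor_of_coArc_adj hC hcX hcdX)
      rwa [hW.subsingleton_coArc_neighborSet hC hcW hceW hcdW]
    · obtain ⟨hc, he, hce, -⟩ := coArc_adj.1 hceW
      exact coArc_adj_of_notMem hc he hce hcX
  intro c d hcd
  refine mem_of_reachable_of_forall_adj
    (T := {c | ∀ d, (coArc G C W).Adj c d → (coArc G C X).Adj c d}) ?_
    (hW.coArc_reachable_of_coArc_adj hC habW hcd) (fun _ ↦ hstep habW habX) d hcd
  exact fun e he f hef g hfg ↦ hstep hef.symm (he f hef).symm hfg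

theorem deleteVerts_le_of_coArc_le (hW : IsWedge G C Cᶜ W u) (hX : IsWedge G C Cᶜ X x)
    (hle : coArc G C W ≤ coArc G C X) : X.deleteVerts {x} ≤ W.deleteVerts {u} := by
  have hmem {y : V} (hyX : y ∈ X.verts) (hyx : y ≠ x) : y ∈ C :=
    by_contra fun hy ↦ hyx (hX.eq_anchor hyX hy)
  have hverts {y : V} (hyX : y ∈ X.verts) (hyx : y ≠ x) : y ∈ W.verts ∧ y ≠ u := by
    have hy := hmem hyX hyx
    obtain ⟨z, hz, hyz⟩ := hX.exists_adj_of_mem hyX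
    exact ⟨(adj_of_coArc_le_coArc hle hy hz hyz).fst_mem, fun h ↦ hW.anchor_notMem (h ▸ hy)⟩
  refine ⟨fun y hy ↦ hverts hy.1 hy.2, fun y z hyz ↦ ?_⟩
  obtain ⟨hyX, hyx, hzX, hzx, hyz⟩ := Subgraph.deleteVerts_adj.1 hyz
  obtain ⟨hyW, hyu⟩ := hverts hyX hyx
  obtain ⟨hzW, hzu⟩ := hverts hzX hzx
  exact Subgraph.deleteVerts_adj.2
    ⟨hyW, hyu, hzW, hzu, adj_of_coArc_le_coArc hle (hmem hyX hyx) (hmem hzX hzx) hyz⟩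

theorem neighborSet_subset_of_deleteVerts_eq (hC : IsInducedCycle G C) (hind : G.IsIndepSet Cᶜ)
    (hW : IsWedge G C Cᶜ W u) (hX : IsWedge G C Cᶜ X x)
    (heq : X.deleteVerts {x} = W.deleteVerts {u}) (hxW : G.neighborSet x ⊆ W.verts) :
    G.neighborSet x ⊆ G.neighborSet u := by
  intro y hxy
  have hne_anchor {z : V} (hz : z ∈ C) : z ≠ u := fun h ↦ hW.anchor_notMem (h ▸ hz)
  have hy : y ∈ C := mem_of_adj_of_isIndepSet_compl hind hX.anchor_notMem hxy
  have hyW : y ∈ W.verts := hxW hxy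
  obtain ⟨z, hyz⟩ := hX.exists_coArc_adj hC hy hxy
  obtain ⟨-, hz, hyzG, hyzX⟩ := coArc_adj.1 hyz
  have hyzW : ¬ W.Adj y z := fun h ↦ by
    have hdel : (W.deleteVerts {u}).Adj y z :=
      Subgraph.deleteVerts_adj.2 ⟨hyW, hne_anchor hy, h.snd_mem, hne_anchor hz, h⟩
    exact hyzX (Subgraph.deleteVerts_adj.1 (heq ▸ hdel)).2.2.2.2
  exact ((hW.adj_or_adj_anchor hC hyW hy hz hyzG).resolve_left hyzW).adj_sub

theorem coArc_le_of_neighborSet_subset [Finite V] (hC : IsInducedCycle G C) (hind : G.IsIndepSet Cᶜ)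
    (hW : IsWedge G C Cᶜ W u) (hX : IsWedge G C Cᶜ X x) (hxW : G.neighborSet x ⊆ W.verts)
    (hxu : ¬ G.neighborSet x ⊆ G.neighborSet u) (hXW : ¬ Improves G X x W u) :
    coArc G C X ≤ W.spanningCoe := by
  intro a b habX
  by_contra habW
  obtain ⟨ha, hb, hab, -⟩ := coArc_adj.1 habX
  have hle : X.deleteVerts {x} ≤ W.deleteVerts {u} :=
    hW.deleteVerts_le_of_coArc_le hX <|
      hW.coArc_le_coArc_of_common_adj hC hX (fun _ h ↦ hxW h.adj_sub)
        (coArc_adj.2 ⟨ha, hb, hab, habW⟩) habX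
  have heq : X.deleteVerts {x} = W.deleteVerts {u} := by_contra fun hne ↦ hXW ⟨hle, hne⟩
  exact hxu (hW.neighborSet_subset_of_deleteVerts_eq hC hind hX heq hxW)

end IsWedge

section Barrier

variable {G : SimpleGraph V} {C : Set V} {W : G.Subgraph} {u y d e : V}

theorem mem_outerPart_of_mem (hd : d ∈ C) (hdW : d ∉ W.verts) : d ∈ outerPart G C W :=
  ⟨hdW, d, hd, hdW, .nil, by simpa using hdW⟩

theorem mem_outerPart_of_adj (hdW : d ∉ W.verts) (hde : G.Adj d e) (he : e ∈ outerPart G C W) :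
    d ∈ outerPart G C W := by
  obtain ⟨-, c, hc, hcW, p, hp⟩ := he
  exact ⟨hdW, c, hc, hcW, .cons hde p, by simpa [hdW] using hp⟩

theorem mem_barrier_of_adj (hd : d ∈ outerPart G C W) (hdy : G.Adj d y) (hyW : y ∈ W.verts) :
    y ∈ barrier G C W u := by
  have hCW : ¬ C ⊆ W.verts := by
    obtain ⟨-, c, hc, hcW, -⟩ := hd
    exact fun h ↦ hcW (h hc)
  rw [barrier, if_neg hCW]
  exact ⟨fun h ↦ h.1 hyW, d, hd, hdy⟩

theorem IsWedge.mem_barrier_of_adj_anchor [Finite V] (hC : IsInducedCycle G C)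
    (hW : IsWedge G C Cᶜ W u) (huy : W.Adj u y) : y ∈ barrier G C W u := by
  by_cases hCW : C ⊆ W.verts
  · rw [barrier, if_pos hCW]
    exact huy.adj_sub
  · obtain ⟨z, hyz⟩ := hW.exists_coArc_adj hC (hW.mem_of_adj_anchor huy) huy.adj_sub
    obtain ⟨-, hz, hyzG, -⟩ := coArc_adj.1 hyz
    have hzW : z ∉ W.verts := hW.notMem_of_adj_anchor_of_coArc_adj hC hCW huy hyz
    exact mem_barrier_of_adj (mem_outerPart_of_mem hz hzW) hyzG.symm huy.snd_mem

theorem IsWedge.adj_of_notMem_barrier [Finite V] (hC : IsInducedCycle G C)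
    (hW : IsWedge G C Cᶜ W u) (hyW : y ∈ W.verts) (hyb : y ∉ barrier G C W u) (hy : y ∈ C)
    (hd : d ∈ C) (hyd : G.Adj y d) : W.Adj y d :=
  (hW.adj_or_adj_anchor hC hyW hy hd hyd).resolve_right
    fun h ↦ hyb (hW.mem_barrier_of_adj_anchor hC h)

theorem IsWedge.attaches_of_notMem_barrier [Finite V] (hC : IsInducedCycle G C)
    (hind : G.IsIndepSet Cᶜ) (hW : IsWedge G C Cᶜ W u) (hyW : y ∈ W.verts)
    (hyb : y ∉ barrier G C W u) (hd : d ∉ C) (hyd : G.Adj y d) : Attaches G d W := by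
  have hdW : d ∉ W.verts := by
    intro hdW
    obtain rfl := hW.eq_anchor hdW hd
    exact hyb (hW.mem_barrier_of_adj_anchor hC (hW.adj_anchor_of_mem hyW hyd.symm))
  refine ⟨hdW, fun e hde ↦ by_contra fun heW ↦ hyb ?_⟩
  have he : e ∈ outerPart G C W :=
    mem_outerPart_of_mem (mem_of_adj_of_isIndepSet_compl hind hd hde) heW
  exact mem_barrier_of_adj (mem_outerPart_of_adj hdW hde he) hyd.symm hyW

end Barrier

theorem IsCobweb.isIndepSet_compl {G : SimpleGraph V} {C : Set V} (hcob : IsCobweb G C Cᶜ) :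
    G.IsIndepSet Cᶜ :=
  fun _ hx _ hy _ ↦ hcob.2.2.2.1 _ hx _ hy

theorem GoodVertex.coArc_le [Finite V] {G : SimpleGraph V} {C : Set V} {σ : V → G.Subgraph}
    {u a y : V} (hcob : IsCobweb G C Cᶜ) (hσ : ∀ v ∈ Cᶜ, IsWedge G C Cᶜ (σ v) v)
    (hu : GoodVertex G Cᶜ σ u) (ha : a ∈ (σ u).verts) (hab : a ∉ barrier G C (σ u) u)
    (hy : y ∉ C) (hay : G.Adj a y) : coArc G C (σ y) ≤ (σ u).spanningCoe := by
  have hC := hcob.1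
  have hind := hcob.isIndepSet_compl
  have hanti := hcob.2.2.2.2.2
  have hW := hσ u hu.1
  obtain ⟨hyW, hNyW⟩ := hW.attaches_of_notMem_barrier hC hind ha hab hy hay
  have hyu : y ≠ u := fun h ↦ hyW (h ▸ hW.anchor_mem_verts)
  exact hW.coArc_le_of_neighborSet_subset hC hind (hσ y hy) hNyW (hanti y hy u hu.1 hyu) (hu.2 y hy)

/-- for a good pair `{u, v}`, each component `P` of
`σ u ⊓ σ v ⊓ C` is separated from `C - V(P)` by the union of the barriers. -/
theorem good_pair_separation [Finite V] (G : SimpleGraph V) (C I : Set V)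
    (hcob : IsCobweb G C I) (σ : V → G.Subgraph)
    (hσ : ∀ v ∈ I, IsWedge G C I (σ v) v)
    (u v : V) (hu : GoodVertex G I σ u) (hv : GoodVertex G I σ v)
    (P : ((σ u ⊓ σ v) ⊓ (⊤ : G.Subgraph).induce C).coe.ConnectedComponent) :
    Separates G (barrier G C (σ u) u ∪ barrier G C (σ v) v)
      (Subtype.val '' P.supp) (C \ (Subtype.val '' P.supp)) := by
  obtain rfl := hcob.2.1
  have hC := hcob.1
  refine separates_image_supp ?_ ?_ P
  · rintro a ⟨⟨hau, hav⟩, ha⟩ hab b hb hadj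
    obtain ⟨hbu, hbv⟩ := not_or.1 hab
    exact ⟨⟨(hσ u hu.1).adj_of_notMem_barrier hC hau hbu ha hb hadj,
      (hσ v hv.1).adj_of_notMem_barrier hC hav hbv ha hb hadj⟩, ha, hb, hadj⟩
  · rintro a ⟨⟨hau, hav⟩, -⟩ hab y hy hay b hyb
    obtain ⟨hbu, hbv⟩ := not_or.1 hab
    have hreach : (coArc G C (σ y)).Reachable a b :=
      (hσ y hy).coArc_reachable_of_adj hC hcob.isIndepSet_compl hay.symm hyb
    refine hreach.mono fun c d hcd ↦ ?_
    obtain ⟨hc, hd, hadj, -⟩ := coArc_adj.1 hcd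
    exact ⟨⟨hu.coArc_le hcob hσ hau hbu hy hay hcd,
      hv.coArc_le hcob hσ hav hbv hy hay hcd⟩, hc, hd, hadj⟩
end
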